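/- arXiv:1004.1854 — 2 statements merged into one kernel-verified Lean document; each statement's English description precedes it below -/
import Mathlib

section
/- If every reward function f_e of a network contribution game belongs to class C_0, then a strong equilibrium exists. Concretely, the state in which every player matched by a greedy matching M (edges considered in nonincreasing order of f_e(B_u,B_v) and added whenever the result is still a matching) places its entire budget on its matching edge, and every unmatched player places zero effort on all its edges, is a strong equilibrium. -/
open Finset

/-- A network contribution game on a finite simple undirected graph. -/
structure NCGame (V : Type) [Fintype V] [DecidableEq V] where
  /-- adjacency relation of the (simple, undirected) graph -/
  Adj : V → V → Prop
  adj_symm : ∀ u v, Adj u v → Adj v u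
  adj_irrefl : ∀ v, ¬ Adj v v
  /-- budget of each player -/
  B : V → ℝ
  B_nonneg : ∀ v, 0 ≤ B v
  /-- reward function of each edge; `f u v x y` is the reward of edge `(u,v)`
  when `u` contributes `x` and `v` contributes `y`. -/
  f : V → V → ℝ → ℝ → ℝ
  f_comm : ∀ u v x y, f u v x y = f v u x y
  f_symm : ∀ u v x y, f u v x y = f u v y x
  f_nonneg : ∀ u v x y, 0 ≤ x → 0 ≤ y → 0 ≤ f u v x y
  f_mono : ∀ u v y, 0 ≤ y → MonotoneOn (fun x => f u v x y) (Set.Ici 0)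

variable {V : Type} [Fintype V] [DecidableEq V]

/-- A state: `s v u` is the effort player `v` puts on the edge `(v,u)`.
It is valid if efforts are nonnegative, supported on edges, and within budget. -/
def validState (g : NCGame V) (s : V → V → ℝ) : Prop :=
  (∀ v u, 0 ≤ s v u) ∧ (∀ v u, ¬ g.Adj v u → s v u = 0) ∧
  (∀ v, ∑ u, s v u ≤ g.B v)

open Classical in
/-- utility of player `v` -/
noncomputable def util (g : NCGame V) (s : V → V → ℝ) (v : V) : ℝ :=
  ∑ u, if g.Adj v u then g.f v u (s v u) (s u v) else 0

/-- social welfare -/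
noncomputable def welfare (g : NCGame V) (s : V → V → ℝ) : ℝ :=
  ∑ v, util g s v

/-- Nash equilibrium: no unilateral improving deviation. -/
def IsNashEq (g : NCGame V) (s : V → V → ℝ) : Prop :=
  validState g s ∧
  ∀ v (t : V → ℝ), validState g (Function.update s v t) →
    util g (Function.update s v t) v ≤ util g s v

/-- Pairwise equilibrium: Nash and no bilateral improving deviation. -/
def IsPairwiseEq (g : NCGame V) (s : V → V → ℝ) : Prop :=
  IsNashEq g s ∧
  ∀ u v (tu tv : V → ℝ), u ≠ v →
    validState g (Function.update (Function.update s u tu) v tv) →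
    ¬(util g s u < util g (Function.update (Function.update s u tu) v tv) u ∧
      util g s v < util g (Function.update (Function.update s u tu) v tv) v)

/-- Strong equilibrium: no coalition has a joint deviation strictly improving
the utility of all its members. -/
def IsStrongEq (g : NCGame V) (s : V → V → ℝ) : Prop :=
  validState g s ∧
  ∀ (C : Finset V) (s' : V → V → ℝ), C.Nonempty → validState g s' →
    (∀ v, v ∉ C → s' v = s v) →
    ∃ v ∈ C, util g s' v ≤ util g s v

/-- class `C`: symmetric, nonnegative, nondecreasing, coordinate-convex. -/
def InClassC (f : ℝ → ℝ → ℝ) : Prop :=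
  (∀ x y, 0 ≤ x → 0 ≤ y → 0 ≤ f x y) ∧
  (∀ x y, f x y = f y x) ∧
  (∀ y, 0 ≤ y → MonotoneOn (fun x => f x y) (Set.Ici 0)) ∧
  (∀ y, 0 ≤ y → ConvexOn ℝ (Set.Ici 0) (fun x => f x y))

/-- class `C₀`: members of `C` vanishing when one argument is `0`. -/
def InClassC0 (f : ℝ → ℝ → ℝ) : Prop :=
  InClassC f ∧ ∀ x, 0 ≤ x → f x 0 = 0

/-- An edge is tight in `s` if both endpoints contribute `0` or their full budget. -/
def tightState (g : NCGame V) (s : V → V → ℝ) : Prop :=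
  ∀ u v, g.Adj u v → s u v = 0 ∨ s u v = g.B u

/-- maximum possible reward of an edge: both endpoints contribute their full budget -/
noncomputable def maxReward (g : NCGame V) (e : V × V) : ℝ :=
  g.f e.1 e.2 (g.B e.1) (g.B e.2)

/-- one step of the greedy matching: add the edge `e` if it is disjoint
from all previously chosen edges. -/
def greedyStep (acc : List (V × V)) (e : V × V) : List (V × V) :=
  if ∀ e' ∈ acc, e'.1 ≠ e.1 ∧ e'.1 ≠ e.2 ∧ e'.2 ≠ e.1 ∧ e'.2 ≠ e.2
  then acc ++ [e] else acc

/-- the greedy matching obtained by scanning the list of edges `L`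
(sorted nonincreasingly by maximum reward) in order. -/
def greedyMatching (L : List (V × V)) : List (V × V) := L.foldl greedyStep []

/-- the state where every player matched by `M` puts its whole budget on its
matching edge, and all other efforts are `0`. -/
noncomputable def matchedState (g : NCGame V) (M : List (V × V)) : V → V → ℝ :=
  fun v u => if (v, u) ∈ M ∨ (u, v) ∈ M then g.B v else 0

/-!
A convex function vanishing at `0` lies below its chords through the origin, so a player spending
the fraction `x / B v` of its budget on an edge gets from it at most that fraction of the edge's
maximum reward. The fractions sum to at most `1`, hence a deviating player earns at most the largest
maximum reward among the edges on which its partner also contributes.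

The greedy matching meets every edge in an edge of at least the same maximum reward, so each edge
has an endpoint whose utility is at least the maximum reward of that edge. In a deviating coalition,
consider the member `v` with the largest utility before the deviation. Edges to other members have
maximum reward at most the utility of `v`, and a player outside the coalition contributes to an edge
at `v` only if it is the matching partner of `v`. So `v` does not gain.
-/

section Matching

variable {α : Type*}

/-- Two edges, given as ordered pairs of endpoints, share no endpoint. The inequalities are those
tested by `greedyStep`. A matching is a list of edges that are pairwise vertex-disjoint. -/
def VertexDisjoint (e e' : α × α) : Prop :=
  e.1 ≠ e'.1 ∧ e.1 ≠ e'.2 ∧ e.2 ≠ e'.1 ∧ e.2 ≠ e'.2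

theorem VertexDisjoint.symm {e e' : α × α} (h : VertexDisjoint e e') : VertexDisjoint e' e :=
  ⟨h.1.symm, h.2.2.1.symm, h.2.1.symm, h.2.2.2.symm⟩

theorem VertexDisjoint.swap_right {e e' : α × α} (h : VertexDisjoint e e') :
    VertexDisjoint e e'.swap :=
  ⟨h.2.1, h.1, h.2.2.2, h.2.2.1⟩

theorem not_vertexDisjoint_self (e : α × α) : ¬ VertexDisjoint e e :=
  fun h => h.1 rfl

theorem eq_of_not_vertexDisjoint {M : List (α × α)} (hM : M.Pairwise VertexDisjoint)
    {e e' : α × α} (he : e ∈ M) (he' : e' ∈ M) (h : ¬ VertexDisjoint e e') : e = e' := by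
  have : Std.Symm (VertexDisjoint (α := α)) := ⟨fun _ _ => VertexDisjoint.symm⟩
  exact by_contra fun hne => h (hM.forall he he' hne)

/-- `u` and `v` are the endpoints of an edge listed in `M`, in either orientation: the condition
under which `matchedState` spends the budget of `u` on the edge to `v`. -/
def Matched (M : List (α × α)) (u v : α) : Prop :=
  (u, v) ∈ M ∨ (v, u) ∈ M

theorem Matched.symm {M : List (α × α)} {u v : α} (h : Matched M u v) : Matched M v u :=
  Or.symm h

theorem Matched.partner_unique {M : List (α × α)} (hM : M.Pairwise VertexDisjoint) {v u u' : α}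
    (hu : Matched M v u) (hu' : Matched M v u') : u = u' := by
  rcases hu with hu | hu <;> rcases hu' with hu' | hu' <;>
    have heq := eq_of_not_vertexDisjoint hM hu hu' (by simp [VertexDisjoint]) <;>
    simp_all only [Prod.mk.injEq]

end Matching

section Greedy

theorem greedyStep_of_forall_vertexDisjoint {M : List (V × V)} {e : V × V}
    (h : ∀ a ∈ M, VertexDisjoint a e) : greedyStep M e = M ++ [e] :=
  if_pos h

theorem greedyStep_of_not_forall_vertexDisjoint {M : List (V × V)} {e : V × V}
    (h : ¬ ∀ a ∈ M, VertexDisjoint a e) : greedyStep M e = M :=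
  if_neg h

theorem subset_greedyStep (M : List (V × V)) (e : V × V) : M ⊆ greedyStep M e := by
  unfold greedyStep
  split_ifs
  · exact List.subset_append_left M [e]
  · exact List.Subset.refl M

theorem greedyStep_sublist (M : List (V × V)) (e : V × V) :
    (greedyStep M e).Sublist (M ++ [e]) := by
  unfold greedyStep
  split_ifs
  · exact List.Sublist.refl _
  · exact List.sublist_append_left M [e]

theorem exists_mem_greedyStep_not_vertexDisjoint (M : List (V × V)) (e : V × V) :
    ∃ a ∈ greedyStep M e, ¬ VertexDisjoint a e ∧ (a ∈ M ∨ a = e) := by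
  by_cases h : ∀ a ∈ M, VertexDisjoint a e
  · rw [greedyStep_of_forall_vertexDisjoint h]
    exact ⟨e, by simp, not_vertexDisjoint_self e, Or.inr rfl⟩
  · rw [greedyStep_of_not_forall_vertexDisjoint h]
    push Not at h
    obtain ⟨a, ha, hae⟩ := h
    exact ⟨a, ha, hae, Or.inl ha⟩

theorem pairwise_vertexDisjoint_greedyStep {M : List (V × V)} (hM : M.Pairwise VertexDisjoint)
    (e : V × V) : (greedyStep M e).Pairwise VertexDisjoint := by
  by_cases h : ∀ a ∈ M, VertexDisjoint a e
  · rw [greedyStep_of_forall_vertexDisjoint h, List.pairwise_append]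
    exact ⟨hM, List.pairwise_singleton _ e, by simpa using h⟩
  · rwa [greedyStep_of_not_forall_vertexDisjoint h]

theorem greedyMatching_concat (L : List (V × V)) (e : V × V) :
    greedyMatching (L ++ [e]) = greedyStep (greedyMatching L) e := by
  simp only [greedyMatching, List.foldl_append, List.foldl_cons, List.foldl_nil]

theorem greedyMatching_sublist (L : List (V × V)) : (greedyMatching L).Sublist L := by
  induction L using List.reverseRecOn with
  | nil => exact List.Sublist.refl []
  | append_singleton L e ih =>
    rw [greedyMatching_concat]
    exact (greedyStep_sublist _ e).trans (ih.append_right [e])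

theorem pairwise_vertexDisjoint_greedyMatching (L : List (V × V)) :
    (greedyMatching L).Pairwise VertexDisjoint := by
  induction L using List.reverseRecOn with
  | nil => exact List.Pairwise.nil
  | append_singleton L e ih =>
    rw [greedyMatching_concat]
    exact pairwise_vertexDisjoint_greedyStep ih e

theorem exists_mem_greedyMatching_not_vertexDisjoint {R : V × V → V × V → Prop} [Std.Refl R]
    {L : List (V × V)} (hL : L.Pairwise R) {e : V × V} (he : e ∈ L) :
    ∃ a ∈ greedyMatching L, ¬ VertexDisjoint a e ∧ R a e := by
  induction L using List.reverseRecOn with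
  | nil => exact absurd he List.not_mem_nil
  | append_singleton L e' ih =>
    obtain ⟨hL, -, hLe'⟩ := List.pairwise_append.1 hL
    rw [greedyMatching_concat]
    rcases List.mem_append.1 he with he | he
    · obtain ⟨a, ha, hae⟩ := ih hL he
      exact ⟨a, subset_greedyStep _ e' ha, hae⟩
    · obtain rfl := List.mem_singleton.1 he
      obtain ⟨a, ha, hae, haL | rfl⟩ :=
        exists_mem_greedyStep_not_vertexDisjoint (greedyMatching L) e
      · exact ⟨a, ha, hae, hLe' a ((greedyMatching_sublist L).subset haL) e he⟩
      · exact ⟨a, ha, hae, refl a⟩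

end Greedy

section Rewards

theorem le_div_mul_of_convexOn_Ici {φ : ℝ → ℝ} (hφ : ConvexOn ℝ (Set.Ici 0) φ) (hφ₀ : φ 0 ≤ 0)
    {x b : ℝ} (hx : 0 ≤ x) (hxb : x ≤ b) : φ x ≤ x / b * φ b := by
  rcases (hx.trans hxb).eq_or_lt with rfl | hb
  · obtain rfl := le_antisymm hxb hx
    simpa using hφ₀
  · have hle_one : x / b ≤ 1 := (div_le_one hb).2 hxb
    calc φ x = φ ((x / b) • b + (1 - x / b) • 0) := by
          rw [smul_zero, add_zero, smul_eq_mul, div_mul_cancel₀ x hb.ne']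
      _ ≤ (x / b) • φ b + (1 - x / b) • φ 0 :=
          hφ.2 hb.le Set.self_mem_Ici (div_nonneg hx hb.le) (sub_nonneg.2 hle_one)
            (add_sub_cancel _ _)
      _ ≤ x / b * φ b :=
          add_le_of_nonpos_right (mul_nonpos_of_nonneg_of_nonpos (sub_nonneg.2 hle_one) hφ₀)

theorem InClassC.le_of_le_right {f : ℝ → ℝ → ℝ} (hf : InClassC f) {x y c : ℝ} (hx : 0 ≤ x)
    (hy : 0 ≤ y) (hyc : y ≤ c) : f x y ≤ f x c := by
  obtain ⟨-, hsymm, hmono, -⟩ := hf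
  rw [hsymm x y, hsymm x c]
  exact hmono x hx hy (hy.trans hyc) hyc

theorem InClassC0.le_div_mul {f : ℝ → ℝ → ℝ} (hf : InClassC0 f) {x y b c : ℝ} (hx : 0 ≤ x)
    (hxb : x ≤ b) (hy : 0 ≤ y) (hyc : y ≤ c) : f x y ≤ x / b * f b c := by
  obtain ⟨hfC, hzero⟩ := hf
  have hb : 0 ≤ b := hx.trans hxb
  have hzero_left : f 0 y = 0 := by rw [hfC.2.1, hzero y hy]
  calc f x y ≤ x / b * f b y :=
        le_div_mul_of_convexOn_Ici (hfC.2.2.2 y hy) hzero_left.le hx hxb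
    _ ≤ x / b * f b c :=
        mul_le_mul_of_nonneg_left (hfC.le_of_le_right hb hy hyc) (div_nonneg hx hb)

end Rewards

section Game

variable {g : NCGame V} {s : V → V → ℝ}

theorem maxReward_swap (g : NCGame V) (u v : V) : maxReward g (u, v) = maxReward g (v, u) := by
  simp only [maxReward]
  rw [g.f_comm, g.f_symm]

theorem validState.le_budget (hs : validState g s) (v u : V) : s v u ≤ g.B v :=
  (single_le_sum (fun i _ => hs.1 v i) (mem_univ u)).trans (hs.2.2 v)

open Classical in
theorem edgeReward_nonneg (hs : ∀ v u, 0 ≤ s v u) (v u : V) :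
    0 ≤ if g.Adj v u then g.f v u (s v u) (s u v) else 0 :=
  ite_nonneg (g.f_nonneg v u _ _ (hs v u) (hs u v)) le_rfl

theorem util_nonneg (hs : ∀ v u, 0 ≤ s v u) (v : V) : 0 ≤ util g s v :=
  sum_nonneg fun u _ => edgeReward_nonneg hs v u

theorem reward_le_util (hs : ∀ v u, 0 ≤ s v u) {v u : V} (hvu : g.Adj v u) :
    g.f v u (s v u) (s u v) ≤ util g s v := by
  classical
  simpa only [util, if_pos hvu] using
    single_le_sum (fun w _ => edgeReward_nonneg (g := g) hs v w) (mem_univ u)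

theorem util_le_of_forall_maxReward_le (hs : validState g s) {v : V}
    (hC : ∀ u, g.Adj v u → InClassC0 (g.f v u)) {c : ℝ} (hc : 0 ≤ c)
    (hedge : ∀ u, g.Adj v u → s u v = 0 ∨ maxReward g (v, u) ≤ c) : util g s v ≤ c := by
  classical
  have ⟨hnonneg, _, hbudget⟩ := hs
  have hfrac (u : V) : 0 ≤ s v u / g.B v := div_nonneg (hnonneg v u) (g.B_nonneg v)
  have hterm (u : V) :
      (if g.Adj v u then g.f v u (s v u) (s u v) else 0) ≤ s v u / g.B v * c := by
    split_ifs with hvu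
    · rcases hedge u hvu with hzero | hle
      · rw [hzero, (hC u hvu).2 _ (hnonneg v u)]
        exact mul_nonneg (hfrac u) hc
      · calc g.f v u (s v u) (s u v) ≤ s v u / g.B v * maxReward g (v, u) :=
              (hC u hvu).le_div_mul (hnonneg v u) (hs.le_budget v u) (hnonneg u v)
                (hs.le_budget u v)
          _ ≤ s v u / g.B v * c := mul_le_mul_of_nonneg_left hle (hfrac u)
    · exact mul_nonneg (hfrac u) hc
  calc util g s v ≤ ∑ u, s v u / g.B v * c := sum_le_sum fun u _ => hterm u
    _ = (∑ u, s v u) / g.B v * c := by rw [← sum_mul, sum_div]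
    _ ≤ c := mul_le_of_le_one_left hc (div_le_one_of_le₀ (hbudget v) (g.B_nonneg v))

theorem isStrongEq_of_forall_maxReward_le (hC : ∀ u v, g.Adj u v → InClassC0 (g.f u v))
    (hs : validState g s)
    (hedge : ∀ u v, g.Adj u v → maxReward g (u, v) ≤ max (util g s u) (util g s v))
    (hactive : ∀ u v, g.Adj u v → s v u = 0 ∨ maxReward g (u, v) ≤ util g s u) :
    IsStrongEq g s := by
  refine ⟨hs, fun C s' hC_nonempty hs' hout => ?_⟩
  obtain ⟨v, hvC, hv_max⟩ := C.exists_max_image (util g s) hC_nonempty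
  refine ⟨v, hvC, util_le_of_forall_maxReward_le hs' (hC v) (util_nonneg hs.1 v) fun u hvu => ?_⟩
  by_cases huC : u ∈ C
  · exact Or.inr ((hedge v u hvu).trans (max_le le_rfl (hv_max u huC)))
  · rw [hout u huC]
    exact hactive v u hvu

end Game

section MatchedState

variable {g : NCGame V} {M : List (V × V)}

theorem matchedState_of_matched {v u : V} (h : Matched M v u) : matchedState g M v u = g.B v :=
  if_pos h

theorem matchedState_of_not_matched {v u : V} (h : ¬ Matched M v u) : matchedState g M v u = 0 :=
  if_neg h

theorem matchedState_nonneg (g : NCGame V) (M : List (V × V)) (v u : V) :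
    0 ≤ matchedState g M v u :=
  ite_nonneg (g.B_nonneg v) le_rfl

theorem sum_matchedState_le (g : NCGame V) (hM : M.Pairwise VertexDisjoint) (v : V) :
    ∑ u, matchedState g M v u ≤ g.B v := by
  by_cases hv : ∃ u, Matched M v u
  · obtain ⟨u, hu⟩ := hv
    have hother (w : V) (hw : w ≠ u) : matchedState g M v w = 0 :=
      matchedState_of_not_matched fun h => hw (h.partner_unique hM hu)
    rw [Fintype.sum_eq_single u hother, matchedState_of_matched hu]
  · rw [sum_eq_zero fun u _ => matchedState_of_not_matched fun h => hv ⟨u, h⟩]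
    exact g.B_nonneg v

theorem Matched.adj (hMadj : ∀ e ∈ M, g.Adj e.1 e.2) {v u : V} (h : Matched M v u) : g.Adj v u :=
  h.elim (hMadj (v, u)) fun h => g.adj_symm u v (hMadj (u, v) h)

theorem validState_matchedState (hMadj : ∀ e ∈ M, g.Adj e.1 e.2)
    (hM : M.Pairwise VertexDisjoint) : validState g (matchedState g M) :=
  ⟨matchedState_nonneg g M, fun _ _ hvu => matchedState_of_not_matched fun h => hvu (h.adj hMadj),
    sum_matchedState_le g hM⟩

theorem maxReward_le_util_matchedState (hMadj : ∀ e ∈ M, g.Adj e.1 e.2) {v u : V}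
    (h : Matched M v u) : maxReward g (v, u) ≤ util g (matchedState g M) v := by
  have hle := reward_le_util (matchedState_nonneg g M) (h.adj hMadj)
  rwa [matchedState_of_matched h, matchedState_of_matched h.symm] at hle

theorem maxReward_le_max_util_of_not_vertexDisjoint (hMadj : ∀ e ∈ M, g.Adj e.1 e.2)
    {a : V × V} (ha : a ∈ M) {u v : V} (hmeet : ¬ VertexDisjoint a (u, v)) :
    maxReward g a ≤ max (util g (matchedState g M) u) (util g (matchedState g M) v) := by
  have hfst : maxReward g a ≤ util g (matchedState g M) a.1 :=
    maxReward_le_util_matchedState hMadj (Or.inl ha)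
  have hsnd : maxReward g a ≤ util g (matchedState g M) a.2 := by
    rw [maxReward_swap g a.1 a.2]
    exact maxReward_le_util_matchedState hMadj (Or.inr ha)
  have hshared : a.1 = u ∨ a.1 = v ∨ a.2 = u ∨ a.2 = v := by
    simpa only [VertexDisjoint, not_and_or, not_not] using hmeet
  rw [le_max_iff]
  rcases hshared with rfl | rfl | rfl | rfl
  · exact Or.inl hfst
  · exact Or.inr hfst
  · exact Or.inl hsnd
  · exact Or.inr hsnd

theorem isStrongEq_matchedState (hC : ∀ u v, g.Adj u v → InClassC0 (g.f u v))
    (hMadj : ∀ e ∈ M, g.Adj e.1 e.2) (hM : M.Pairwise VertexDisjoint)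
    (hdom : ∀ u v, g.Adj u v →
      ∃ a ∈ M, ¬ VertexDisjoint a (u, v) ∧ maxReward g (u, v) ≤ maxReward g a) :
    IsStrongEq g (matchedState g M) := by
  refine isStrongEq_of_forall_maxReward_le hC (validState_matchedState hMadj hM)
    (fun u v huv => ?_) (fun u v _ => ?_)
  · obtain ⟨a, ha, hmeet, hle⟩ := hdom u v huv
    exact hle.trans (maxReward_le_max_util_of_not_vertexDisjoint hMadj ha hmeet)
  · by_cases h : Matched M u v
    · exact Or.inr (maxReward_le_util_matchedState hMadj h)
    · exact Or.inl (matchedState_of_not_matched fun h' => h h'.symm)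

theorem exists_mem_greedyMatching_maxReward_le {L : List (V × V)}
    (hLcover : ∀ u v, g.Adj u v → (u, v) ∈ L ∨ (v, u) ∈ L)
    (hLsorted : L.Pairwise fun e e' => maxReward g e' ≤ maxReward g e) {u v : V}
    (huv : g.Adj u v) :
    ∃ a ∈ greedyMatching L, ¬ VertexDisjoint a (u, v) ∧ maxReward g (u, v) ≤ maxReward g a := by
  have : Std.Refl fun e e' : V × V => maxReward g e' ≤ maxReward g e := ⟨fun _ => le_rfl⟩
  rcases hLcover u v huv with he | he
  · exact exists_mem_greedyMatching_not_vertexDisjoint hLsorted he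
  · obtain ⟨a, ha, hmeet, hle⟩ := exists_mem_greedyMatching_not_vertexDisjoint hLsorted he
    exact ⟨a, ha, fun h => hmeet h.swap_right, maxReward_swap g u v ▸ hle⟩

end MatchedState

/-- if all reward functions lie in class `C₀`, a strong
equilibrium exists; concretely the greedy-matching state is one. -/
theorem classC0_strong_exists (g : NCGame V)
    (hC : ∀ u v, g.Adj u v → InClassC0 (g.f u v))
    (L : List (V × V))
    (hLadj : ∀ e ∈ L, g.Adj e.1 e.2)
    (hLcover : ∀ u v, g.Adj u v → (u, v) ∈ L ∨ (v, u) ∈ L)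
    (hLnodup : L.Pairwise fun e e' => e ≠ e' ∧ e ≠ (e'.2, e'.1))
    (hLsorted : L.Pairwise fun e e' => maxReward g e' ≤ maxReward g e) :
    (∃ s, IsStrongEq g s) ∧
    IsStrongEq g (matchedState g (greedyMatching L)) := by
  have hstrong : IsStrongEq g (matchedState g (greedyMatching L)) :=
    isStrongEq_matchedState hC (fun e he => hLadj e ((greedyMatching_sublist L).subset he))
      (pairwise_vertexDisjoint_greedyMatching L)
      fun _ _ huv => exists_mem_greedyMatching_maxReward_le hLcover hLsorted huv
  exact ⟨⟨_, hstrong⟩, hstrong⟩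
end

section
/- If every reward function of a network contribution game belongs to class C' (strictly coordinate-convex), then every pairwise equilibrium is tight, i.e., in every pairwise equilibrium s, every edge e=(u,v) satisfies s_u(e) ∈ {0, B_u} and s_v(e) ∈ {0, B_v}. -/
open Finset

variable {V : Type} [Fintype V] [DecidableEq V]

/-!
Against fixed strategies of the others, the utility of a player is a sum of strictly convex
functions of its own efforts, hence strictly convex on its polytope of feasible strategies. An
equilibrium strategy maximizes it, so it is an extreme point of this polytope. A feasible strategy
`x` with `0 < x i < B` is not extreme: it lies strictly between the strategy putting all of `B`
on `i` and the strategy obtained from `x` by emptying `i` and rescaling by `B / (B - x i)`.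
-/

section StrictConvexity

variable {𝕜 β : Type*} [Semiring 𝕜] [PartialOrder 𝕜]

theorem mem_extremePoints_of_strictConvexOn_of_isMaxOn {E : Type*} [AddCommMonoid E] [Module 𝕜 E]
    [AddCommMonoid β] [LinearOrder β] [IsOrderedAddMonoid β] [Module 𝕜 β] [PosSMulStrictMono 𝕜 β]
    {C : Set E} {F : E → β} {x : E} (hF : StrictConvexOn 𝕜 C F) (hx : x ∈ C)
    (hmax : IsMaxOn F C x) : x ∈ C.extremePoints 𝕜 := by
  refine ⟨hx, fun y hy z hz hxyz ↦ ?_⟩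
  rcases eq_or_ne y z with rfl | hyz
  · obtain ⟨a, b, -, -, hab, rfl⟩ := hxyz
    exact (Convex.combo_self hab y).symm
  · have hlt : F x < max (F y) (F z) := hF.lt_on_openSegment hy hz hyz hxyz
    exact absurd (max_le (hmax hy) (hmax hz)) hlt.not_ge

theorem strictConvexOn_sum_apply {ι : Type*} {E : ι → Type*} [∀ i, AddCommMonoid (E i)]
    [∀ i, Module 𝕜 (E i)] [AddCommMonoid β] [PartialOrder β] [IsOrderedCancelAddMonoid β]
    [Module 𝕜 β] {S : Finset ι} {T : ∀ i, Set (E i)} {φ : ∀ i, E i → β} {C : Set (∀ i, E i)}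
    (hφ : ∀ i ∈ S, StrictConvexOn 𝕜 (T i) (φ i)) (hC : Convex 𝕜 C)
    (hCT : ∀ x ∈ C, ∀ i ∈ S, x i ∈ T i) (hinj : Set.InjOn S.restrict C) :
    StrictConvexOn 𝕜 C (fun x ↦ ∑ i ∈ S, φ i (x i)) := by
  refine ⟨hC, fun x hx y hy hxy a b ha hb hab ↦ ?_⟩
  obtain ⟨i, hi, hxyi⟩ : ∃ i ∈ S, x i ≠ y i := by
    by_contra! heq
    exact hxy (hinj hx hy (funext fun i ↦ heq i i.2))
  rw [Finset.smul_sum, Finset.smul_sum, ← Finset.sum_add_distrib]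
  refine Finset.sum_lt_sum (fun j hj ↦ ?_) ⟨i, hi, ?_⟩
  · exact (hφ j hj).convexOn.2 (hCT x hx j hj) (hCT y hy j hj) ha.le hb.le hab
  · exact (hφ i hi).2 (hCT x hx i hi) (hCT y hy i hi) hxyi ha hb hab

end StrictConvexity

theorem mem_openSegment_single_smul_update_zero {ι 𝕜 : Type*} [DecidableEq ι] [Field 𝕜]
    [LinearOrder 𝕜] [IsStrictOrderedRing 𝕜] {x : ι → 𝕜} {i : ι} {B : 𝕜} (hi : 0 < x i)
    (hiB : x i < B) :
    x ∈ openSegment 𝕜 (Pi.single i B) ((B / (B - x i)) • Function.update x i 0) := by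
  have hB : 0 < B := hi.trans hiB
  have hrest : 0 < B - x i := sub_pos.2 hiB
  refine ⟨x i / B, (B - x i) / B, by positivity, by positivity, by field_simp; ring, ?_⟩
  ext j
  rcases eq_or_ne j i with rfl | hji
  · simp [hB.ne']
  · simp only [Pi.add_apply, Pi.smul_apply, Pi.single_eq_of_ne hji, Function.update_of_ne hji,
      smul_eq_mul]
    field_simp
    ring

section BudgetPolytope

variable {ι M 𝕜 : Type*} [Fintype ι]

/-- The ways to spend a total of at most `B` on the coordinates in `S`: the strategies available
to a player with budget `B` and neighbourhood `S`. As in `validState`, vectors are indexed by all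
of `ι` and vanish off `S`. -/
def budgetPolytope [AddCommMonoid M] [Preorder M] (S : Set ι) (B : M) : Set (ι → M) :=
  {x | (∀ i, 0 ≤ x i) ∧ (∀ i, i ∉ S → x i = 0) ∧ ∑ i, x i ≤ B}

variable {S : Set ι}

theorem single_mem_budgetPolytope [AddCommMonoid M] [Preorder M] [DecidableEq ι] {i : ι} {B : M}
    (hi : i ∈ S) (hB : 0 ≤ B) : Pi.single i B ∈ budgetPolytope S B :=
  ⟨Pi.single_nonneg.2 hB,
    fun _ hj ↦ Pi.single_eq_of_ne (ne_of_mem_of_not_mem hi hj).symm _, by simp⟩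

theorem update_zero_mem_budgetPolytope [AddCommGroup M] [PartialOrder M] [IsOrderedAddMonoid M]
    [DecidableEq ι] {B : M} {x : ι → M} (hx : x ∈ budgetPolytope S B) (i : ι) :
    Function.update x i 0 ∈ budgetPolytope S (B - x i) := by
  obtain ⟨hx₀, hxS, hxB⟩ := hx
  refine ⟨fun j ↦ ?_, fun j hj ↦ ?_, ?_⟩
  · rcases eq_or_ne j i with rfl | hji <;> simp [*]
  · rcases eq_or_ne j i with rfl | hji <;> simp [*]
  · rw [Finset.sum_update_of_mem (Finset.mem_univ i), zero_add, ← Finset.erase_eq,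
      Finset.sum_erase_eq_sub (Finset.mem_univ i)]
    gcongr

theorem convex_budgetPolytope [Semiring 𝕜] [PartialOrder 𝕜] [IsOrderedRing 𝕜] (S : Set ι)
    (B : 𝕜) : Convex 𝕜 (budgetPolytope S B) := by
  rintro x ⟨hx₀, hxS, hxB⟩ y ⟨hy₀, hyS, hyB⟩ a b ha hb hab
  refine ⟨fun i ↦ ?_, fun i hi ↦ ?_, ?_⟩
  · exact add_nonneg (mul_nonneg ha (hx₀ i)) (mul_nonneg hb (hy₀ i))
  · simp [hxS i hi, hyS i hi]
  · calc ∑ i, (a • x + b • y) i = a * ∑ i, x i + b * ∑ i, y i := by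
          simp [Finset.sum_add_distrib, Finset.mul_sum]
      _ ≤ a * B + b * B := by gcongr
      _ = B := by rw [← add_mul, hab, one_mul]

theorem smul_mem_budgetPolytope [Semiring 𝕜] [PartialOrder 𝕜] [IsOrderedRing 𝕜] {B c : 𝕜}
    {x : ι → 𝕜} (hc : 0 ≤ c) (hx : x ∈ budgetPolytope S B) :
    c • x ∈ budgetPolytope S (c * B) := by
  obtain ⟨hx₀, hxS, hxB⟩ := hx
  refine ⟨fun i ↦ mul_nonneg hc (hx₀ i), fun i hi ↦ by simp [hxS i hi], ?_⟩
  simpa [← Finset.mul_sum] using mul_le_mul_of_nonneg_left hxB hc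

theorem eq_zero_or_eq_of_mem_extremePoints_budgetPolytope [Field 𝕜] [LinearOrder 𝕜]
    [IsStrictOrderedRing 𝕜] {B : 𝕜} {x : ι → 𝕜}
    (hx : x ∈ (budgetPolytope S B).extremePoints 𝕜) (i : ι) : x i = 0 ∨ x i = B := by
  classical
  obtain ⟨⟨hx₀, hxS, hxB⟩, hextreme⟩ := hx
  by_contra! ⟨hne, hneB⟩
  have hi : 0 < x i := (hx₀ i).lt_of_ne' hne
  have hiB : x i < B :=
    ((Finset.single_le_sum (fun j _ ↦ hx₀ j) (Finset.mem_univ i)).trans hxB).lt_of_ne hneB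
  have hsingle : Pi.single i B ∈ budgetPolytope S B :=
    single_mem_budgetPolytope (not_imp_comm.1 (hxS i) hne) (hi.trans hiB).le
  have hrescaled : (B / (B - x i)) • Function.update x i 0 ∈ budgetPolytope S B := by
    have hrest : 0 < B - x i := sub_pos.2 hiB
    simpa [hrest.ne'] using smul_mem_budgetPolytope (div_nonneg (hi.trans hiB).le hrest.le)
      (update_zero_mem_budgetPolytope ⟨hx₀, hxS, hxB⟩ i)
  have hx_eq : Pi.single i B = x :=
    hextreme hsingle hrescaled (mem_openSegment_single_smul_update_zero hi hiB)
  exact hneB (by rw [← hx_eq, Pi.single_eq_same])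

end BudgetPolytope

section Game

variable {g : NCGame V} {s : V → V → ℝ}

theorem validState_iff_forall_mem_budgetPolytope :
    validState g s ↔ ∀ v, s v ∈ budgetPolytope {w | g.Adj v w} (g.B v) := by
  simp only [validState, budgetPolytope, Set.mem_ofPred_eq, forall_and]

theorem validState_update (hs : validState g s) {v : V} {t : V → ℝ}
    (ht : t ∈ budgetPolytope {w | g.Adj v w} (g.B v)) :
    validState g (Function.update s v t) := by
  rw [validState_iff_forall_mem_budgetPolytope] at hs ⊢
  exact (Function.forall_update_iff s
    (p := fun w x ↦ x ∈ budgetPolytope {w' | g.Adj w w'} (g.B w))).2 ⟨ht, fun w _ ↦ hs w⟩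

open Classical in
theorem util_update_self (g : NCGame V) (s : V → V → ℝ) (v : V) (t : V → ℝ) :
    util g (Function.update s v t) v = ∑ w with g.Adj v w, g.f v w (t w) (s w v) := by
  rw [util, ← Finset.sum_filter]
  refine Finset.sum_congr rfl fun w hw ↦ ?_
  have hwv : w ≠ v := by
    rintro rfl
    exact g.adj_irrefl w (Finset.mem_filter.1 hw).2
  rw [Function.update_self, Function.update_of_ne hwv]

theorem strictConvexOn_util_update {v : V}
    (hstrict : ∀ w, g.Adj v w → StrictConvexOn ℝ (Set.Ici 0) (fun x ↦ g.f v w x (s w v))) :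
    StrictConvexOn ℝ (budgetPolytope {w | g.Adj v w} (g.B v))
      (fun t ↦ util g (Function.update s v t) v) := by
  classical
  simp only [util_update_self]
  refine strictConvexOn_sum_apply (T := fun _ ↦ Set.Ici 0)
    (φ := fun w x ↦ g.f v w x (s w v)) (fun w hw ↦ hstrict w (Finset.mem_filter.1 hw).2)
    (convex_budgetPolytope _ _) (fun t ht w _ ↦ ht.1 w) fun t ht t' ht' heq ↦ funext fun w ↦ ?_
  by_cases hw : g.Adj v w
  · exact congrFun heq ⟨w, Finset.mem_filter.2 ⟨Finset.mem_univ w, hw⟩⟩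
  · rw [ht.2.1 w hw, ht'.2.1 w hw]

theorem IsNashEq.isMaxOn_util_update (hs : IsNashEq g s) (v : V) :
    IsMaxOn (fun t ↦ util g (Function.update s v t) v)
      (budgetPolytope {w | g.Adj v w} (g.B v)) (s v) := by
  intro t ht
  simpa using hs.2 v t (validState_update hs.1 ht)

theorem classC'_pairwise_eq_tight_general (g : NCGame V)
    (hstrict : ∀ u v, g.Adj u v → ∀ y, 0 ≤ y →
      StrictConvexOn ℝ (Set.Ici 0) (fun x => g.f u v x y))
    (s : V → V → ℝ) (hs : IsNashEq g s) :
    tightState g s := by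
  intro u v _
  have hconvex : StrictConvexOn ℝ (budgetPolytope {w | g.Adj u w} (g.B u))
      (fun t ↦ util g (Function.update s u t) u) :=
    strictConvexOn_util_update fun w hw ↦ hstrict u w hw _ (hs.1.1 w u)
  have hmem : s u ∈ budgetPolytope {w | g.Adj u w} (g.B u) :=
    validState_iff_forall_mem_budgetPolytope.1 hs.1 u
  have hextreme : s u ∈ (budgetPolytope {w | g.Adj u w} (g.B u)).extremePoints ℝ :=
    mem_extremePoints_of_strictConvexOn_of_isMaxOn hconvex hmem (hs.isMaxOn_util_update u)
  exact eq_zero_or_eq_of_mem_extremePoints_budgetPolytope hextreme v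

end Game

/-- with strictly coordinate-convex class-`C'` rewards, every
pairwise equilibrium is tight. -/
theorem classC'_pairwise_eq_tight (g : NCGame V)
    (hC : ∀ u v, g.Adj u v → InClassC (g.f u v))
    (hstrict : ∀ u v, g.Adj u v → ∀ y, 0 ≤ y →
      StrictConvexOn ℝ (Set.Ici 0) (fun x => g.f u v x y))
    (s : V → V → ℝ) (hs : IsPairwiseEq g s) :
    tightState g s :=
  classC'_pairwise_eq_tight_general g hstrict s hs.1
end
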